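/- arXiv:1611.07730 — 6 statements merged into one kernel-verified Lean document; each statement's English description precedes it below -/
import Mathlib

section
/- Let d ≥ 1 and let μ be a finite positive-semidefinite-matrix-valued Borel measure on ℝ that is symmetric, and let Ξ be the associated matrix-valued function Ξ_{k,q}(t) = ∫_ℝ (cos(tν) − 1) μ_{k,q}(dν). Then for all indices k, q ∈ {1,…,d}, the Cesàro means converge: lim_{t→∞} (1/t) ∫₀ᵗ Ξ_{k,q}(s) ds = −μ_{k,q}(ℝ ∖ {0}). -/
open MeasureTheory

/-- A finite positive-semidefinite-matrix-valued Borel measure on `ℝ`: a countably additive map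
from the Borel σ-algebra of `ℝ` to the real symmetric `d×d` matrices taking positive
semidefinite values on every Borel set; it is encoded through its entries, which are finite
signed Borel measures on `ℝ`. -/
structure MatrixMeasure (d : ℕ) where
  /-- the entries, as finite signed Borel measures -/
  entry : Fin d → Fin d → SignedMeasure ℝ
  /-- on every Borel set the value is a (symmetric) positive semidefinite real matrix -/
  posSemidef : ∀ X : Set ℝ, MeasurableSet X →
    (Matrix.of fun k q => entry k q X).PosSemidef

/-- The integral `∫ f dν` of a function against a finite signed Borel measure `ν`, defined via
the Jordan decomposition of `ν`. -/
noncomputable def sintegral (ν : SignedMeasure ℝ) (f : ℝ → ℝ) : ℝ :=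
  (∫ x, f x ∂ν.toJordanDecomposition.posPart) - ∫ x, f x ∂ν.toJordanDecomposition.negPart

/-- The matrix-valued function `Ξ(t)` with entries
`Ξ_{k,q}(t) := ∫ (cos(tν) − 1) μ_{k,q}(dν)`. -/
noncomputable def Xi {d : ℕ} (μ : MatrixMeasure d) (t : ℝ) : Matrix (Fin d) (Fin d) ℝ :=
  Matrix.of fun k q => sintegral (μ.entry k q) (fun ν => Real.cos (t * ν) - 1)

/-- The matrix-valued measure `μ` is symmetric: `μ(X) = μ(−X)` for every Borel set `X`. -/
def MatrixMeasure.IsSymmetric {d : ℕ} (μ : MatrixMeasure d) : Prop :=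
  ∀ (k q : Fin d) (X : Set ℝ), MeasurableSet X → μ.entry k q X = μ.entry k q (-X)


lemma aux_int (m : Measure ℝ) [IsFiniteMeasure m] (s : ℝ) :
    Integrable (fun x : ℝ => Real.cos (s * x) - 1) m := by
  refine Integrable.of_bound (C := 2) (by fun_prop) (Filter.Eventually.of_forall fun x => ?_)
  rw [Real.norm_eq_abs, abs_le]
  constructor <;> linarith [Real.neg_one_le_cos (s * x), Real.cos_le_one (s * x)]

lemma aux_cont (m : Measure ℝ) [IsFiniteMeasure m] :
    Continuous (fun s : ℝ => ∫ x, (Real.cos (s * x) - 1) ∂m) := by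
  refine continuous_of_dominated (bound := fun _ => 2) (fun s => by fun_prop)
    (fun s => Filter.Eventually.of_forall fun x => ?_) (integrable_const _)
    (Filter.Eventually.of_forall fun x => by fun_prop)
  rw [Real.norm_eq_abs, abs_le]
  constructor <;> linarith [Real.neg_one_le_cos (s * x), Real.cos_le_one (s * x)]

lemma aux_inner (t x : ℝ) (ht : 0 < t) :
    (1/t) * ∫ s in (0:ℝ)..t, (Real.cos (s * x) - 1) = Real.sinc (t * x) - 1 := by
  rw [intervalIntegral.integral_sub (Continuous.intervalIntegrable (by fun_prop) _ _)
    (Continuous.intervalIntegrable (by fun_prop) _ _)]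
  by_cases hx : x = 0
  · subst hx; simp
  · rw [intervalIntegral.integral_comp_mul_right (fun y => Real.cos y) hx,
      Real.sinc_of_ne_zero (by positivity)]
    simp
    field_simp

lemma aux_swap (m : Measure ℝ) [IsFiniteMeasure m] (t : ℝ) (ht : 0 < t) :
    (1/t) * ∫ s in (0:ℝ)..t, ∫ x, (Real.cos (s * x) - 1) ∂m
      = ∫ x, (Real.sinc (t * x) - 1) ∂m := by
  have h : ∫ s in (0:ℝ)..t, ∫ x, (Real.cos (s * x) - 1) ∂m
      = ∫ x, (∫ s in (0:ℝ)..t, (Real.cos (s * x) - 1)) ∂m := by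
    simp only [intervalIntegral.integral_of_le ht.le]
    refine integral_integral_swap ?_
    refine Integrable.of_bound (C := 2) ?_ (Filter.Eventually.of_forall fun x => ?_)
    · exact Continuous.aestronglyMeasurable (by fun_prop)
    · simp only [Function.uncurry]
      rw [Real.norm_eq_abs, abs_le]
      constructor <;> linarith [Real.neg_one_le_cos (x.1 * x.2), Real.cos_le_one (x.1 * x.2)]
  rw [h, ← integral_const_mul]
  exact integral_congr_ae (Filter.Eventually.of_forall fun x => aux_inner t x ht)

lemma aux_pt (x : ℝ) (hx : x ≠ 0) :
    Filter.Tendsto (fun t : ℝ => Real.sinc (t * x)) Filter.atTop (nhds 0) := by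
  refine squeeze_zero_norm' (a := fun t : ℝ => |x|⁻¹ * t⁻¹) ?_ ?_
  · filter_upwards [Filter.eventually_gt_atTop 0] with t ht
    rw [Real.sinc_of_ne_zero (by positivity), Real.norm_eq_abs, abs_div, abs_mul, abs_of_pos ht,
      ← mul_inv, mul_comm |x|, div_eq_mul_inv]
    exact mul_le_of_le_one_left (by positivity) (Real.abs_sin_le_one _)
  · simpa using tendsto_inv_atTop_zero.const_mul (|x|⁻¹)

lemma aux_lim (m : Measure ℝ) [IsFiniteMeasure m] :
    Filter.Tendsto (fun t : ℝ => (1/t) * ∫ s in (0:ℝ)..t, ∫ x, (Real.cos (s * x) - 1) ∂m)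
      Filter.atTop (nhds (-(m.real ({0}ᶜ : Set ℝ)))) := by
  have h : Filter.Tendsto (fun t : ℝ => ∫ x, (Real.sinc (t * x) - 1) ∂m) Filter.atTop
      (nhds (∫ x, ({0}ᶜ : Set ℝ).indicator (fun _ => (-1:ℝ)) x ∂m)) := by
    refine tendsto_integral_filter_of_dominated_convergence (fun _ => 2)
      (Filter.Eventually.of_forall fun t =>
        Continuous.aestronglyMeasurable
          ((Real.continuous_sinc.comp (continuous_const.mul continuous_id)).sub continuous_const))
      (Filter.Eventually.of_forall fun t => Filter.Eventually.of_forall fun x => ?_)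
      (integrable_const _) (Filter.Eventually.of_forall fun x => ?_)
    · rw [Real.norm_eq_abs, abs_le]
      constructor <;> linarith [Real.neg_one_le_sinc (t * x), Real.sinc_le_one (t * x)]
    · by_cases hx : x = 0
      · subst hx; simp
      · simpa [hx] using (aux_pt x hx).sub_const 1
  rw [integral_indicator_const _ (measurableSet_singleton 0).compl] at h
  simp only [smul_eq_mul, mul_neg, mul_one] at h
  refine h.congr' ?_
  filter_upwards [Filter.eventually_gt_atTop 0] with t ht
  exact (aux_swap m t ht).symm

lemma aux_signed (ν : SignedMeasure ℝ) (X : Set ℝ) (hX : MeasurableSet X) :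
    ν X = ν.toJordanDecomposition.posPart.real X - ν.toJordanDecomposition.negPart.real X := by
  conv_lhs => rw [← ν.toSignedMeasure_toJordanDecomposition]
  simp [JordanDecomposition.toSignedMeasure, Measure.toSignedMeasure_apply_measurable hX]

/-- Let `d ≥ 1` and let `μ` be a finite positive-semidefinite-matrix-valued
Borel measure on `ℝ` that is symmetric, and let `Ξ` be the associated matrix-valued function
`Ξ_{k,q}(t) = ∫ (cos(tν) − 1) μ_{k,q}(dν)`. Then, for all indices `k, q`, the Cesàro means
converge: `lim_{t→∞} (1/t) ∫₀ᵗ Ξ_{k,q}(s) ds = −μ_{k,q}(ℝ ∖ {0})`. -/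
theorem statement1 {d : ℕ} (hd : 1 ≤ d) (μ : MatrixMeasure d) (hsym : μ.IsSymmetric)
    (k q : Fin d) :
    Filter.Tendsto (fun t : ℝ => (1/t) * ∫ s in (0:ℝ)..t, Xi μ s k q)
      Filter.atTop (nhds (-(μ.entry k q ({0}ᶜ : Set ℝ)))) := by
  have h := (aux_lim (μ.entry k q).toJordanDecomposition.posPart).sub
    (aux_lim (μ.entry k q).toJordanDecomposition.negPart)
  rw [aux_signed _ _ (measurableSet_singleton 0).compl]
  convert h using 2 with t
  · rw [← mul_sub, ← intervalIntegral.integral_sub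
      ((aux_cont _).intervalIntegrable _ _) ((aux_cont _).intervalIntegrable _ _)]
    rfl
  · ring
end

section
/- Let d ≥ 1, let μ be a finite positive-semidefinite-matrix-valued Borel measure on ℝ, let w ∈ ℝ^d, and let Ξ be the associated matrix-valued function Ξ_{k,q}(t) = ∫_ℝ (cos(tν) − 1) μ_{k,q}(dν). Let E : ℝ → ℝ be a Schwartz function with ∫_ℝ E(s) ds = 0 and Fourier transform Ê(ν) := ∫_ℝ e^{−iνs} E(s) ds. Then ∫_ℝ ∫_ℝ ⟨w, Ξ(s₁−s₂) w⟩ E(s₁) E(s₂) ds₂ ds₁ = ∫_ℝ |Ê(ν)|² ⟨w, μ(dν) w⟩, and ∫_ℝ (∫_{−∞}^{s₁} ⟨w, Ξ(s₁−s₂) w⟩ E(s₂) ds₂) E(s₁) ds₁ = ½ ∫_ℝ |Ê(ν)|² ⟨w, μ(dν) w⟩; in particular both quantities are nonnegative. Here ⟨w, μ(·) w⟩ denotes the finite positive Borel measure X ↦ ⟨w, μ(X) w⟩. -/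
open MeasureTheory

/-- The quadratic form `⟨w, M w⟩ = ∑_{k,q} w_k M_{k,q} w_q` of a real matrix. -/
def quadForm {d : ℕ} (w : Fin d → ℝ) (M : Matrix (Fin d) (Fin d) ℝ) : ℝ :=
  ∑ k : Fin d, ∑ q : Fin d, w k * M k q * w q

/-- Fourier transform `Ê(ν) := ∫ e^{−iνs} E(s) ds` of a Schwartz function. -/
noncomputable def fhat (E : SchwartzMap ℝ ℝ) (ν : ℝ) : ℂ :=
  ∫ s : ℝ, Complex.exp (-(Complex.I * ν * s)) * (E s : ℂ)

lemma quad_integral {d : ℕ} (μ : MatrixMeasure d) (w : Fin d → ℝ)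
    (mw : Measure ℝ) (hfin : IsFiniteMeasure mw)
    (hmw : ∀ X : Set ℝ, MeasurableSet X →
      (mw X).toReal = quadForm w (Matrix.of fun k q => μ.entry k q X))
    (f : ℝ → ℝ) (hf : Continuous f) (C : ℝ) (hC : ∀ x, ‖f x‖ ≤ C) :
    quadForm w (Matrix.of fun k q => sintegral (μ.entry k q) f) = ∫ x, f x ∂mw := by
  classical
  let P : Fin d × Fin d → Measure ℝ := fun p => (μ.entry p.1 p.2).toJordanDecomposition.posPart
  let N : Fin d × Fin d → Measure ℝ := fun p => (μ.entry p.1 p.2).toJordanDecomposition.negPart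
  let c : Fin d × Fin d → ℝ := fun p => w p.1 * w p.2
  have iP : ∀ p, IsFiniteMeasure (P p) := fun p =>
    (μ.entry p.1 p.2).toJordanDecomposition.posPart_finite
  have iN : ∀ p, IsFiniteMeasure (N p) := fun p =>
    (μ.entry p.1 p.2).toJordanDecomposition.negPart_finite
  let u : Fin d × Fin d → NNReal := fun p => (c p).toNNReal
  let v : Fin d × Fin d → NNReal := fun p => (-(c p)).toNNReal
  have huv : ∀ p, c p = (u p : ℝ) - v p := by
    intro p
    simp only [u, v, Real.coe_toNNReal']
    rcases le_total 0 (c p) with h | h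
    · rw [max_eq_left h, max_eq_right (by linarith)]; ring
    · rw [max_eq_right h, max_eq_left (by linarith)]; ring
  have hint : ∀ (m : Measure ℝ), IsFiniteMeasure m → Integrable f m := fun m _ =>
    Integrable.of_bound hf.aestronglyMeasurable C (Filter.Eventually.of_forall hC)
  have hentry : ∀ p : Fin d × Fin d, ∀ X, MeasurableSet X →
      μ.entry p.1 p.2 X = (P p X).toReal - (N p X).toReal := by
    intro p X hX
    conv_lhs => rw [← SignedMeasure.toSignedMeasure_toJordanDecomposition (μ.entry p.1 p.2)]
    simp [JordanDecomposition.toSignedMeasure,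
      Measure.toSignedMeasure_apply_measurable hX, Measure.real, P, N]
  have hAB : mw + ∑ p, (u p • N p + v p • P p) = ∑ p, (u p • P p + v p • N p) := by
    ext X hX
    rw [← ENNReal.toReal_eq_toReal_iff' (measure_ne_top _ _) (measure_ne_top _ _)]
    simp only [Measure.add_apply, Measure.finsetSum_apply]
    rw [ENNReal.toReal_add (measure_ne_top _ _)
      (by refine (ENNReal.sum_lt_top.2 fun p _ => ?_).ne
          exact ENNReal.add_lt_top.2 ⟨measure_lt_top (u p • N p) X, measure_lt_top (v p • P p) X⟩),
      ENNReal.toReal_sum (fun p _ => (ENNReal.add_lt_top.2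
        ⟨measure_lt_top (u p • N p) X, measure_lt_top (v p • P p) X⟩).ne),
      ENNReal.toReal_sum (fun p _ => (ENNReal.add_lt_top.2
        ⟨measure_lt_top (u p • P p) X, measure_lt_top (v p • N p) X⟩).ne), hmw X hX, quadForm,
      ← Fintype.sum_prod_type', ← Finset.sum_add_distrib]
    refine Finset.sum_congr rfl fun p _ => ?_
    rw [ENNReal.toReal_add (measure_ne_top (u p • N p) X) (measure_ne_top (v p • P p) X),
      ENNReal.toReal_add (measure_ne_top (u p • P p) X) (measure_ne_top (v p • N p) X)]
    simp only [Measure.smul_apply, ENNReal.toReal_smul, NNReal.smul_def, smul_eq_mul, Matrix.of_apply]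
    rw [hentry p X hX]
    have := huv p
    simp only [c] at this
    linear_combination ((P p X).toReal - (N p X).toReal) * this
  have hI := congrArg (fun m => ∫ x, f x ∂m) hAB
  rw [integral_add_measure (hint _ inferInstance) (hint _ inferInstance),
    integral_finsetSum_measure (fun p _ => hint _ inferInstance),
    integral_finsetSum_measure (fun p _ => hint _ inferInstance)] at hI
  have e1 : ∀ (a b : NNReal) (m n : Measure ℝ) (_ : IsFiniteMeasure m) (_ : IsFiniteMeasure n),
      ∫ x, f x ∂(a • m + b • n) = a * ∫ x, f x ∂m + b * ∫ x, f x ∂n := by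
    intro a b m n _ _
    rw [integral_add_measure (hint _ inferInstance) (hint _ inferInstance),
      integral_smul_nnreal_measure, integral_smul_nnreal_measure]
    simp [NNReal.smul_def]
  rw [← eq_sub_iff_add_eq, ← Finset.sum_sub_distrib] at hI
  rw [hI, quadForm, ← Fintype.sum_prod_type']
  refine Finset.sum_congr rfl fun p _ => ?_
  rw [e1 _ _ _ _ (iP p) (iN p), e1 _ _ _ _ (iN p) (iP p)]
  have := huv p
  simp only [c] at this
  simp only [Matrix.of_apply, sintegral]
  change _ * (∫ x, f x ∂(P p) - ∫ x, f x ∂(N p)) * _ = _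
  linear_combination (∫ x, f x ∂(P p) - ∫ x, f x ∂(N p)) * this

lemma fhat_sq (E : SchwartzMap ℝ ℝ) (ν : ℝ) :
    ‖fhat E ν‖ ^ 2 = (∫ s, Real.cos (s * ν) * E s) ^ 2 + (∫ s, Real.sin (s * ν) * E s) ^ 2 := by
  have hE : Integrable (fun s => E s) := E.integrable
  have hc : Integrable (fun s => Real.cos (s * ν) * E s) :=
    hE.bdd_mul (c := 1) (by fun_prop) (Filter.Eventually.of_forall fun s => by
      simpa using Real.abs_cos_le_one _)
  have hs : Integrable (fun s => Real.sin (s * ν) * E s) :=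
    hE.bdd_mul (c := 1) (by fun_prop) (Filter.Eventually.of_forall fun s => by
      simpa using Real.abs_sin_le_one _)
  have : fhat E ν = ((∫ s, Real.cos (s * ν) * E s : ℝ) : ℂ)
      - ((∫ s, Real.sin (s * ν) * E s : ℝ) : ℂ) * Complex.I := by
    rw [← integral_complex_ofReal, ← integral_complex_ofReal, ← integral_mul_const,
      ← integral_sub hc.ofReal (hs.ofReal.mul_const _), fhat]
    refine integral_congr_ae (Filter.Eventually.of_forall fun s => ?_)
    simp only
    rw [show -(Complex.I * ν * s) = (((-(s * ν) : ℝ)) : ℂ) * Complex.I by push_cast; ring,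
      Complex.exp_mul_I, ← Complex.ofReal_cos, ← Complex.ofReal_sin, Real.cos_neg, Real.sin_neg]
    push_cast
    ring
  rw [this, ← Complex.normSq_eq_norm_sq, Complex.normSq_apply]
  simp
  ring

theorem statement3 {d : ℕ} (hd : 1 ≤ d) (μ : MatrixMeasure d) (w : Fin d → ℝ)
    (mw : Measure ℝ) (hfin : IsFiniteMeasure mw)
    (hmw : ∀ X : Set ℝ, MeasurableSet X →
      (mw X).toReal = quadForm w (Matrix.of fun k q => μ.entry k q X))
    (E : SchwartzMap ℝ ℝ) (hE : ∫ s : ℝ, E s = 0) :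
    (∫ s₁ : ℝ, ∫ s₂ : ℝ, quadForm w (Xi μ (s₁ - s₂)) * E s₁ * E s₂)
        = ∫ ν : ℝ, ‖fhat E ν‖ ^ 2 ∂mw ∧
    (∫ s₁ : ℝ, (∫ s₂ in Set.Iic s₁, quadForm w (Xi μ (s₁ - s₂)) * E s₂) * E s₁)
        = (1/2) * ∫ ν : ℝ, ‖fhat E ν‖ ^ 2 ∂mw ∧
    0 ≤ ∫ ν : ℝ, ‖fhat E ν‖ ^ 2 ∂mw := by
  have hEi : Integrable (fun s => E s) := E.integrable
  have hEc : Continuous (fun s => E s) := E.continuous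
  have hb : ∀ x : ℝ, ‖Real.cos x - 1‖ ≤ 2 := fun x => by
    rw [Real.norm_eq_abs, abs_le]
    constructor <;> linarith [Real.cos_le_one x, Real.neg_one_le_cos x]
  let g : ℝ → ℝ := fun t => ∫ ν, (Real.cos (t * ν) - 1) ∂mw
  have hg : ∀ t, quadForm w (Xi μ t) = g t := fun t =>
    quad_integral μ w mw hfin hmw (fun ν => Real.cos (t * ν) - 1) (by fun_prop) 2
      (fun x => hb _)
  have hgneg : ∀ t, g (-t) = g t := fun t => by simp [g, Real.cos_neg]
  let K : ℝ → ℝ → ℝ := fun s₁ s₂ => g (s₁ - s₂) * E s₁ * E s₂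
  have hKsymm : ∀ s₁ s₂, K s₁ s₂ = K s₂ s₁ := fun s₁ s₂ => by
    simp only [K]
    rw [← hgneg (s₁ - s₂), neg_sub]; ring
  have hEE : Integrable (fun p : ℝ × ℝ => E p.1 * E p.2) (volume.prod volume) :=
    hEi.mul_prod hEi
  have hT : Integrable (Function.uncurry fun (p : ℝ × ℝ) (ν : ℝ) =>
      (Real.cos ((p.1 - p.2) * ν) - 1) * (E p.1 * E p.2)) ((volume.prod volume).prod mw) := by
    refine (hEE.comp_fst mw).bdd_mul (c := 2) ?_ (Filter.Eventually.of_forall fun x => hb _)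
    exact Continuous.aestronglyMeasurable (by fun_prop)
  have hKp : ∀ p : ℝ × ℝ, K p.1 p.2 =
      ∫ ν, (Real.cos ((p.1 - p.2) * ν) - 1) * (E p.1 * E p.2) ∂mw := fun p => by
    rw [integral_mul_const]; simp only [K, g]; ring
  have hKi : Integrable (Function.uncurry K) (volume.prod volume) := by
    refine hT.integral_prod_left.congr (Filter.Eventually.of_forall fun p => ?_)
    exact (hKp p).symm
  have h1 : ∫ s₁, ∫ s₂, K s₁ s₂ = ∫ ν : ℝ, ‖fhat E ν‖ ^ 2 ∂mw := by
    rw [integral_integral hKi]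
    simp_rw [hKp]
    rw [integral_integral_swap hT]
    refine integral_congr_ae (Filter.Eventually.of_forall fun ν => ?_)
    simp only
    have hc : Integrable (fun s => Real.cos (s * ν) * E s) :=
      hEi.bdd_mul (c := 1) (by fun_prop) (Filter.Eventually.of_forall fun s => by
        simpa using Real.abs_cos_le_one _)
    have hs : Integrable (fun s => Real.sin (s * ν) * E s) :=
      hEi.bdd_mul (c := 1) (by fun_prop) (Filter.Eventually.of_forall fun s => by
        simpa using Real.abs_sin_le_one _)
    have : ∀ p : ℝ × ℝ, (Real.cos ((p.1 - p.2) * ν) - 1) * (E p.1 * E p.2) =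
        ((Real.cos (p.1 * ν) * E p.1) * (Real.cos (p.2 * ν) * E p.2)
        + (Real.sin (p.1 * ν) * E p.1) * (Real.sin (p.2 * ν) * E p.2)) - E p.1 * E p.2 := by
      intro p
      rw [sub_mul p.1, Real.cos_sub]; ring
    simp_rw [this]
    have hcs : Integrable (fun p : ℝ × ℝ =>
        (Real.cos (p.1 * ν) * E p.1) * (Real.cos (p.2 * ν) * E p.2)
        + (Real.sin (p.1 * ν) * E p.1) * (Real.sin (p.2 * ν) * E p.2)) (volume.prod volume) :=
      (hc.mul_prod hc).add (hs.mul_prod hs)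
    rw [integral_sub hcs hEE,
      integral_add (hc.mul_prod hc) (hs.mul_prod hs),
      integral_prod_mul (fun s => Real.cos (s * ν) * E s) (fun s => Real.cos (s * ν) * E s),
      integral_prod_mul (fun s => Real.sin (s * ν) * E s) (fun s => Real.sin (s * ν) * E s),
      integral_prod_mul (fun s => E s) (fun s => E s), hE, fhat_sq]
    ring
  have hKi' : Integrable (fun p : ℝ × ℝ => K p.1 p.2) (volume.prod volume) := hKi
  have hA : MeasurableSet {p : ℝ × ℝ | p.2 ≤ p.1} := measurableSet_le measurable_snd measurable_fst
  have hB : MeasurableSet {p : ℝ × ℝ | p.1 ≤ p.2} := measurableSet_le measurable_fst measurable_snd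
  have hAi := hKi'.indicator hA
  have hBi := hKi'.indicator hB
  have eA : ∀ s₁ s₂, ({p : ℝ × ℝ | p.2 ≤ p.1}.indicator (fun p : ℝ × ℝ => K p.1 p.2)) (s₁, s₂)
      = (Set.Iic s₁).indicator (fun s => K s₁ s) s₂ := fun s₁ s₂ => by
    simp [Set.indicator_apply]
  have eB : ∀ s₁ s₂, ({p : ℝ × ℝ | p.1 ≤ p.2}.indicator (fun p : ℝ × ℝ => K p.1 p.2)) (s₁, s₂)
      = (Set.Ici s₁).indicator (fun s => K s₁ s) s₂ := fun s₁ s₂ => by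
    simp [Set.indicator_apply]
  have hswap : ∫ s₁, ∫ s₂ in Set.Iic s₁, K s₁ s₂ = ∫ s₁, ∫ s₂ in Set.Ici s₁, K s₁ s₂ := by
    simp_rw [← integral_indicator measurableSet_Iic, ← integral_indicator measurableSet_Ici,
      ← eA, ← eB]
    rw [integral_integral_swap (f := fun s₁ s₂ =>
      ({p : ℝ × ℝ | p.2 ≤ p.1}.indicator (fun p : ℝ × ℝ => K p.1 p.2)) (s₁, s₂)) hAi]
    refine integral_congr_ae (Filter.Eventually.of_forall fun s₁ => ?_)
    refine integral_congr_ae (Filter.Eventually.of_forall fun s₂ => ?_)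
    simp [Set.indicator_apply, hKsymm s₁ s₂]
  have hAI : Integrable (fun s₁ => ∫ s₂ in Set.Iic s₁, K s₁ s₂) := by
    refine hAi.integral_prod_left.congr (Filter.Eventually.of_forall fun s₁ => ?_)
    simp only [eA]
    rw [integral_indicator measurableSet_Iic]
  have hBI : Integrable (fun s₁ => ∫ s₂ in Set.Ici s₁, K s₁ s₂) := by
    refine hBi.integral_prod_left.congr (Filter.Eventually.of_forall fun s₁ => ?_)
    simp only [eB]
    rw [integral_indicator measurableSet_Ici]
  have hsum : (∫ s₁, ∫ s₂ in Set.Iic s₁, K s₁ s₂) + ∫ s₁, ∫ s₂ in Set.Ici s₁, K s₁ s₂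
      = ∫ s₁, ∫ s₂, K s₁ s₂ := by
    rw [← integral_add hAI hBI]
    refine integral_congr_ae ?_
    filter_upwards [hKi.prod_right_ae] with s₁ h
    have h' : Integrable (fun s₂ => K s₁ s₂) := h
    rw [integral_Ici_eq_integral_Ioi]
    exact intervalIntegral.integral_Iic_add_Ioi h'.integrableOn h'.integrableOn
  have h2 : (∫ s₁ : ℝ, (∫ s₂ in Set.Iic s₁, quadForm w (Xi μ (s₁ - s₂)) * E s₂) * E s₁)
      = ∫ s₁, ∫ s₂ in Set.Iic s₁, K s₁ s₂ := by
    refine integral_congr_ae (Filter.Eventually.of_forall fun s₁ => ?_)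
    simp only
    rw [← integral_mul_const]
    refine integral_congr_ae (Filter.Eventually.of_forall fun s₂ => ?_)
    simp only [hg, K]
    ring
  refine ⟨?_, ?_, integral_nonneg fun ν => by positivity⟩
  · simp_rw [hg]
    exact h1
  · rw [h2, ← h1]
    linarith
end

section
/- For every J ∈ Dom(ρ) and every E ∈ ρ(J) one has Q*(J) = ⟨J, E⟩ = Q(E); in particular Q*(J) is finite on Dom(ρ) and, as sets, ⟨J, ρ(J)⟩ = {Q*(J)} = Q(ρ(J)) (microscopic Joule's law: the heat production equals the pairing of the current with the resistivity applied to it). -/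
open MeasureTheory

/-- `S₀`: the closed subspace of real Schwartz functions with zero mean
(the AC-condition `∫ E = 0`). -/
noncomputable def S0 : Submodule ℝ (SchwartzMap ℝ ℝ) where
  carrier := {E | ∫ s, E s = 0}
  zero_mem' := by simp
  add_mem' := by
    intro f g hf hg
    simp only [Set.mem_setOf_eq] at *
    have h : ∀ s : ℝ, (↑(f + g) : ℝ → ℝ) s = f s + g s := fun s => rfl
    rw [show (↑(f + g) : ℝ → ℝ) = fun s => f s + g s from funext h,
      integral_add f.integrable g.integrable, hf, hg, add_zero]
  smul_mem' := by
    intro c f hf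
    simp only [Set.mem_setOf_eq] at *
    have h : (↑(c • f) : ℝ → ℝ) = fun s => c • f s := rfl
    rw [h, integral_smul, hf, smul_zero]

/-- `S₀*`: the topological dual of `S₀` (continuous real-linear functionals). -/
abbrev S0d := ↥S0 →L[ℝ] ℝ

/-- `B(E,E′) := ½ ∫ Re(Ê(ν)·conj(Ê′(ν))) m(dν)`. -/
noncomputable def Bform (m : Measure ℝ) (E E' : SchwartzMap ℝ ℝ) : ℝ :=
  (1/2) * ∫ ν, (fhat E ν * (starRingEnd ℂ) (fhat E' ν)).re ∂m

/-- `Q(E) := B(E,E) = ½ ∫ |Ê(ν)|² m(dν)`. -/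
noncomputable def Qform (m : Measure ℝ) (E : ↥S0) : ℝ := Bform m E E

/-- The subdifferential `∂Q(E) ⊆ S₀*`. -/
def subQ (m : Measure ℝ) (E : ↥S0) : Set S0d :=
  {J | ∀ E' : ↥S0, Qform m E' ≥ Qform m E + J (E' - E)}

/-- The Legendre–Fenchel transform `Q*(J) := sup_{E∈S₀} (2⟨J,E⟩ − Q(E))`, with values
in `[−∞,∞]` (in fact in `[0,∞]`). -/
noncomputable def Qstar (m : Measure ℝ) (J : S0d) : EReal :=
  ⨆ E : ↥S0, ((2 * J E - Qform m E : ℝ) : EReal)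

/-- The subdifferential `∂Q*(J) ⊆ S₀`, with inequalities read in `[−∞,∞]`. -/
def subQstar (m : Measure ℝ) (J : S0d) : Set ↥S0 :=
  {E | ∀ J' : S0d, Qstar m J' ≥ Qstar m J + ((J' E - J E : ℝ) : EReal)}

/-- The AC-conductivity `σ(E) := ½ ∂Q(E)`. -/
def sigmaMap (m : Measure ℝ) (E : ↥S0) : Set S0d := {J | (2:ℝ) • J ∈ subQ m E}

/-- The AC-resistivity `ρ(J) := ½ ∂Q*(J)`. -/
def rhoMap (m : Measure ℝ) (J : S0d) : Set ↥S0 := {E | (2:ℝ) • E ∈ subQstar m J}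

/-- `Dom(ρ) := {J ∈ S₀* : ∂Q*(J) ≠ ∅}`. -/
def DomRho (m : Measure ℝ) : Set S0d := {J | (subQstar m J).Nonempty}

lemma fhat_norm_integrand (E : SchwartzMap ℝ ℝ) (ν s : ℝ) :
    ‖Complex.exp (-(Complex.I * ν * s)) * (E s : ℂ)‖ = ‖E s‖ := by
  rw [norm_mul, Complex.norm_exp]
  simp

lemma fhat_integrable (E : SchwartzMap ℝ ℝ) (ν : ℝ) :
    Integrable (fun s : ℝ => Complex.exp (-(Complex.I * ν * s)) * (E s : ℂ)) := by
  refine E.integrable.norm.mono' ?_ ?_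
  · exact (Continuous.mul (by fun_prop)
      (Complex.continuous_ofReal.comp E.continuous)).aestronglyMeasurable
  · exact Filter.Eventually.of_forall fun s => (fhat_norm_integrand E ν s).le

lemma fhat_continuous (E : SchwartzMap ℝ ℝ) : Continuous (fhat E) := by
  unfold fhat
  refine continuous_of_dominated (bound := fun s => ‖E s‖) ?_ ?_ E.integrable.norm ?_
  · exact fun ν => (fhat_integrable E ν).aestronglyMeasurable
  · exact fun ν => Filter.Eventually.of_forall fun s => (fhat_norm_integrand E ν s).le
  · exact Filter.Eventually.of_forall fun s => by fun_prop

lemma fhat_bound (E : SchwartzMap ℝ ℝ) (ν : ℝ) : ‖fhat E ν‖ ≤ ∫ s, ‖E s‖ := by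
  unfold fhat
  refine (norm_integral_le_integral_norm _).trans (le_of_eq ?_)
  exact integral_congr_ae (Filter.Eventually.of_forall fun s => fhat_norm_integrand E ν s)

lemma fhat_add (E F : SchwartzMap ℝ ℝ) (ν : ℝ) : fhat (E + F) ν = fhat E ν + fhat F ν := by
  unfold fhat
  rw [← integral_add (fhat_integrable E ν) (fhat_integrable F ν)]
  congr 1; ext s
  simp [mul_add]

lemma fhat_smul (c : ℝ) (E : SchwartzMap ℝ ℝ) (ν : ℝ) : fhat (c • E) ν = c * fhat E ν := by
  unfold fhat
  rw [← integral_const_mul]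
  congr 1; ext s
  simp; ring

lemma Bint_bound (E F : SchwartzMap ℝ ℝ) (ν : ℝ) :
    ‖(fhat E ν * (starRingEnd ℂ) (fhat F ν)).re‖ ≤ (∫ s, ‖E s‖) * ∫ s, ‖F s‖ := by
  refine (Complex.abs_re_le_norm _).trans ?_
  rw [norm_mul, RCLike.norm_conj]
  exact mul_le_mul (fhat_bound E ν) (fhat_bound F ν) (norm_nonneg _)
    (integral_nonneg fun s => norm_nonneg _)

lemma Bint_integrable (m : Measure ℝ) [IsFiniteMeasure m] (E F : SchwartzMap ℝ ℝ) :
    Integrable (fun ν => (fhat E ν * (starRingEnd ℂ) (fhat F ν)).re) m := by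
  refine Integrable.of_bound (C := (∫ s, ‖E s‖) * ∫ s, ‖F s‖) ?_ ?_
  · refine Continuous.aestronglyMeasurable ?_
    exact Complex.continuous_re.comp ((fhat_continuous E).mul
      (Complex.continuous_conj.comp (fhat_continuous F)))
  · exact Filter.Eventually.of_forall (Bint_bound E F)

lemma Bform_add (m : Measure ℝ) [IsFiniteMeasure m] (E F G : SchwartzMap ℝ ℝ) :
    Bform m E (F + G) = Bform m E F + Bform m E G := by
  unfold Bform
  rw [← mul_add, ← integral_add (Bint_integrable m E F) (Bint_integrable m E G)]
  congr 2; ext ν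
  rw [fhat_add]; simp; ring

lemma Bform_smul (m : Measure ℝ) (c : ℝ) (E F : SchwartzMap ℝ ℝ) :
    Bform m E (c • F) = c * Bform m E F := by
  unfold Bform
  rw [mul_left_comm, ← integral_const_mul c]
  congr 2; ext ν
  rw [fhat_smul]; simp; ring

lemma Bform_smul_smul (m : Measure ℝ) (c : ℝ) (E : SchwartzMap ℝ ℝ) :
    Bform m (c • E) (c • E) = c ^ 2 * Bform m E E := by
  unfold Bform
  rw [mul_left_comm, ← integral_const_mul (c ^ 2)]
  congr 2; ext ν
  rw [fhat_smul]; simp; ring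

lemma Bform_nonneg (m : Measure ℝ) (E : SchwartzMap ℝ ℝ) : 0 ≤ Bform m E E := by
  unfold Bform
  refine mul_nonneg (by norm_num) (integral_nonneg fun ν => ?_)
  simp only [Complex.mul_re, Complex.conj_re, Complex.conj_im, Pi.zero_apply]
  nlinarith [mul_self_nonneg (fhat E ν).re, mul_self_nonneg (fhat E ν).im]

lemma Bform_cs (m : Measure ℝ) [IsFiniteMeasure m] (E F : SchwartzMap ℝ ℝ) :
    2 * Bform m E F ≤ Bform m E E + Bform m F F := by
  unfold Bform
  rw [mul_left_comm, ← integral_const_mul, ← mul_add,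
    ← integral_add (Bint_integrable m E E) (Bint_integrable m F F)]
  refine mul_le_mul_of_nonneg_left ?_ (by norm_num)
  refine integral_mono ((Bint_integrable m E F).const_mul 2)
    ((Bint_integrable m E E).add (Bint_integrable m F F)) fun ν => ?_
  simp only [Complex.mul_re, Complex.conj_re, Complex.conj_im]
  nlinarith [mul_self_nonneg ((fhat E ν).re - (fhat F ν).re),
    mul_self_nonneg ((fhat E ν).im - (fhat F ν).im)]

lemma Bform_bound (m : Measure ℝ) [IsFiniteMeasure m] (E F : SchwartzMap ℝ ℝ) :
    ‖Bform m E F‖ ≤ ((1/2) * ((∫ s, ‖E s‖) * m.real Set.univ)) * ∫ s, ‖F s‖ := by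
  unfold Bform
  rw [norm_mul]
  have := norm_integral_le_of_norm_le_const (μ := m)
    (Filter.Eventually.of_forall (Bint_bound E F))
  have h2 : ‖(1/2 : ℝ)‖ = 1/2 := by norm_num
  rw [h2]
  nlinarith

lemma continuous_L1 : Continuous fun F : SchwartzMap ℝ ℝ => ∫ s, ‖F s‖ := by
  have h : (fun F : SchwartzMap ℝ ℝ => ∫ s, ‖F s‖) =
      fun F => ‖SchwartzMap.toLpCLM ℝ ℝ 1 (volume : Measure ℝ) F‖ := by
    ext F
    rw [L1.norm_eq_integral_norm]
    refine integral_congr_ae ?_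
    filter_upwards [SchwartzMap.coeFn_toLp F 1 (volume : Measure ℝ)] with s hs
    rw [SchwartzMap.toLpCLM_apply, hs]
  rw [h]
  fun_prop

/-- The current `B(E, ·)`. -/
noncomputable def JE (m : Measure ℝ) [IsFiniteMeasure m] (E : ↥S0) : S0d where
  toFun F := Bform m E F
  map_add' F G := Bform_add m E F G
  map_smul' c F := Bform_smul m c E F
  cont := by
    let f : ↥S0 →+ ℝ :=
      { toFun := fun F => Bform m E F
        map_zero' := by simpa using Bform_smul m 0 E 0
        map_add' := fun F G => Bform_add m E F G }
    have : Continuous f := by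
      refine continuous_of_continuousAt_zero f ?_
      rw [ContinuousAt, map_zero]
      refine squeeze_zero_norm (fun F => Bform_bound m E F) ?_
      have hc : Continuous fun F : ↥S0 =>
          ((1/2) * ((∫ s, ‖(E : SchwartzMap ℝ ℝ) s‖) * m.real Set.univ)) *
            ∫ s, ‖(F : SchwartzMap ℝ ℝ) s‖ :=
        continuous_const.mul (continuous_L1.comp continuous_subtype_val)
      have := hc.tendsto 0
      simpa using this
    exact this

lemma Qstar_JE_le (m : Measure ℝ) [IsFiniteMeasure m] (E : ↥S0) :
    Qstar m (JE m E) ≤ (Qform m E : ℝ) := by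
  refine iSup_le fun F => ?_
  have := Bform_cs m E F
  have h : (JE m E) F = Bform m E F := rfl
  rw [EReal.coe_le_coe_iff, h]
  unfold Qform
  linarith

lemma Qstar_smul_le (m : Measure ℝ) (J : S0d) (t q : ℝ) (ht : t ≠ 0) (hq : Qstar m J = q) :
    Qstar m (t • J) ≤ ((t ^ 2 * q : ℝ) : EReal) := by
  refine iSup_le fun F => ?_
  have h1 : ((2 * J (t⁻¹ • F) - Qform m (t⁻¹ • F) : ℝ) : EReal) ≤ q := by
    rw [← hq]
    exact le_iSup (fun E : ↥S0 => ((2 * J E - Qform m E : ℝ) : EReal)) (t⁻¹ • F)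
  rw [EReal.coe_le_coe_iff] at h1 ⊢
  have h2 : Qform m (t⁻¹ • F) = (t⁻¹) ^ 2 * Qform m F := Bform_smul_smul m t⁻¹ F
  rw [h2, map_smul, smul_eq_mul] at h1
  have h3 := mul_le_mul_of_nonneg_left h1 (sq_nonneg t)
  have h4 : t ^ 2 * (2 * (t⁻¹ * J F) - t⁻¹ ^ 2 * Qform m F) = 2 * (t * J F) - Qform m F := by
    field_simp
  rw [h4] at h3
  simpa using h3

lemma joule_aux (m : Measure ℝ) [IsFiniteMeasure m] (J : S0d) (E : ↥S0)
    (hE : E ∈ rhoMap m J) : Qstar m J = ((J E : ℝ) : EReal) ∧ J E = Qform m E := by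
  have hE' : ∀ J' : S0d,
      Qstar m J + ((J' ((2:ℝ) • E) - J ((2:ℝ) • E) : ℝ) : EReal) ≤ Qstar m J' := hE
  have hlow : ∀ F : ↥S0, ((2 * J F - Qform m F : ℝ) : EReal) ≤ Qstar m J :=
    fun F => le_iSup (fun E : ↥S0 => ((2 * J E - Qform m E : ℝ) : EReal)) F
  have hbot : Qstar m J ≠ ⊥ := fun h => by
    have := hlow 0
    rw [h, le_bot_iff] at this
    exact EReal.coe_ne_bot _ this
  have h0 : Qstar m (0 : S0d) ≤ ((0 : ℝ) : EReal) := by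
    refine iSup_le fun F => ?_
    have : 0 ≤ Qform m F := Bform_nonneg m F
    rw [EReal.coe_le_coe_iff]
    simpa using this
  have htop : Qstar m J ≠ ⊤ := fun h => by
    have := (hE' 0).trans h0
    rw [h, EReal.top_add_coe] at this
    exact EReal.coe_ne_top _ (top_le_iff.mp this)
  obtain ⟨q, hq⟩ : ∃ q : ℝ, Qstar m J = q := ⟨_, (EReal.coe_toReal htop hbot).symm⟩
  have key : ∀ t : ℝ, t ≠ 0 → q + (2 * t * J E - 2 * J E) ≤ t ^ 2 * q := by
    intro t ht
    have h := (hE' (t • J)).trans (Qstar_smul_le m J t q ht hq)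
    rw [hq, ← EReal.coe_add, EReal.coe_le_coe_iff] at h
    simp at h
    linarith
  have hqJ : q = J E := by
    have k1 : ∀ e : ℝ, e ≠ -1 → 0 ≤ 2 * e * (q - J E) + e ^ 2 * q := by
      intro e he
      have := key (1 + e) (fun h => he (by linarith))
      nlinarith
    have hq0 : 0 ≤ q := by
      have := hlow 0
      rw [hq, EReal.coe_le_coe_iff] at this
      have h2 : Qform m (0 : ↥S0) = 0 := by
        unfold Qform
        simpa using Bform_smul m 0 ((0 : ↥S0) : SchwartzMap ℝ ℝ) 0
      simpa [h2] using this
    by_contra hne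
    set d := q - J E with hd
    have hd0 : d ≠ 0 := sub_ne_zero.mpr hne
    have hd2 : 0 < d ^ 2 := by positivity
    -- pick e = -d / (q + 1 + |d|)
    have hD : 0 < q + 1 + |d| := by positivity
    have hD1 : |d| < q + 1 + |d| := by linarith
    have he : -d / (q + 1 + |d|) ≠ -1 := by
      intro h
      rw [div_eq_iff hD.ne'] at h
      have := le_abs_self d
      linarith
    have h := k1 _ he
    have h5 : 2 * (-d / (q + 1 + |d|)) * d + (-d / (q + 1 + |d|)) ^ 2 * q
        = (d ^ 2 / (q + 1 + |d|) ^ 2) * (q - 2 * (q + 1 + |d|)) := by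
      field_simp
      ring
    rw [h5] at h
    have h6 : 0 < d ^ 2 / (q + 1 + |d|) ^ 2 := by positivity
    have := abs_nonneg d
    nlinarith
  refine ⟨by rw [hq, hqJ], le_antisymm ?_ ?_⟩
  · have := hlow E
    rw [hq, EReal.coe_le_coe_iff] at this
    linarith
  · have h := (hE' (JE m E)).trans (Qstar_JE_le m E)
    rw [hq, ← EReal.coe_add, EReal.coe_le_coe_iff] at h
    have hB : (JE m E) E = Qform m E := rfl
    rw [map_smul, map_smul, hB, smul_eq_mul, smul_eq_mul] at h
    linarith

/-- microscopic Joule's law. For every `J ∈ Dom(ρ)` and every `E ∈ ρ(J)` one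
has `Q*(J) = ⟨J,E⟩ = Q(E)`; in particular `Q*(J)` is finite on `Dom(ρ)` and, as sets,
`⟨J, ρ(J)⟩ = {Q*(J)} = Q(ρ(J))`. -/
theorem statement9 (m : Measure ℝ) [IsFiniteMeasure m] (J : S0d) (hJ : J ∈ DomRho m) :
    (∀ E ∈ rhoMap m J, Qstar m J = ((J E : ℝ) : EReal) ∧ J E = Qform m E) ∧
    Qstar m J ≠ ⊤ ∧
    ((fun E : ↥S0 => ((J E : ℝ) : EReal)) '' rhoMap m J = {Qstar m J}) ∧
    ((fun E : ↥S0 => ((Qform m E : ℝ) : EReal)) '' rhoMap m J = {Qstar m J}) := by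
  have main := joule_aux m J
  obtain ⟨E0, hE0⟩ := hJ
  have hmem : (2:ℝ)⁻¹ • E0 ∈ rhoMap m J := by
    have h : (2:ℝ) • ((2:ℝ)⁻¹ • E0) = E0 := smul_inv_smul₀ two_ne_zero E0
    change (2:ℝ) • ((2:ℝ)⁻¹ • E0) ∈ subQstar m J
    rw [h]
    exact hE0
  refine ⟨main, ?_, ?_, ?_⟩
  · rw [(main _ hmem).1]
    exact EReal.coe_ne_top _
  · refine Set.eq_singleton_iff_unique_mem.mpr ⟨⟨_, hmem, (main _ hmem).1.symm⟩, ?_⟩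
    rintro _ ⟨E, hE, rfl⟩
    exact (main E hE).1.symm
  · refine Set.eq_singleton_iff_unique_mem.mpr ⟨⟨_, hmem, ?_⟩, ?_⟩
    · rw [(main _ hmem).1, (main _ hmem).2]
    · rintro _ ⟨E, hE, rfl⟩
      rw [(main _ hE).1, (main _ hE).2]
end

section
/- For every finite complex Borel measure μ on ℝ and every z ∈ ℂ with Im z > 0, the function s ↦ e^{izs}·μ̂(s) is integrable on [0,∞), where μ̂(s) := ∫_ℝ e^{−iνs} μ(dν), and the Borel transform of μ satisfies ∫_ℝ (ν − z)⁻¹ μ(dν) = i ∫₀^∞ e^{izs} μ̂(s) ds. -/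
open MeasureTheory

/-- The integral `∫ f dμ` of a complex-valued function against a finite complex Borel measure
`μ`, defined via the Jordan decompositions of the real and imaginary parts of `μ`. -/
noncomputable def cintegral (μ : ComplexMeasure ℝ) (f : ℝ → ℂ) : ℂ :=
  ((∫ x, f x ∂(ComplexMeasure.re μ).toJordanDecomposition.posPart)
      - ∫ x, f x ∂(ComplexMeasure.re μ).toJordanDecomposition.negPart)
    + Complex.I * ((∫ x, f x ∂(ComplexMeasure.im μ).toJordanDecomposition.posPart)
      - ∫ x, f x ∂(ComplexMeasure.im μ).toJordanDecomposition.negPart)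

/-- The Fourier transform `μ̂(s) := ∫ e^{−iνs} μ(dν)` of a finite complex Borel measure. -/
noncomputable def cfourier (μ : ComplexMeasure ℝ) (s : ℝ) : ℂ :=
  cintegral μ (fun ν => Complex.exp (-(Complex.I * ν * s)))

lemma comb_aux (m : Measure ℝ) (f g h k : ℝ → ℂ) (hf : Integrable f m) (hg : Integrable g m)
    (hh : Integrable h m) (hk : Integrable k m) :
    ∫ s, ((f s - g s) + Complex.I * (h s - k s)) ∂m
      = ((∫ s, f s ∂m) - ∫ s, g s ∂m) + Complex.I * ((∫ s, h s ∂m) - ∫ s, k s ∂m) := by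
  have h1 : Integrable (fun s => f s - g s) m := hf.sub hg
  have h2 : Integrable (fun s => Complex.I * (h s - k s)) m := (hh.sub hk).const_mul Complex.I
  rw [integral_add h1 h2, integral_const_mul, integral_sub hf hg, integral_sub hh hk]

lemma pos_aux (m : Measure ℝ) [IsFiniteMeasure m] (z : ℂ) (hz : 0 < z.im) :
    Integrable (fun s : ℝ => Complex.exp (Complex.I * z * s) *
      ∫ ν : ℝ, Complex.exp (-(Complex.I * ν * s)) ∂m) (volume.restrict (Set.Ici (0 : ℝ))) ∧
    ∫ ν : ℝ, ((ν : ℂ) - z)⁻¹ ∂m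
      = Complex.I * ∫ s in Set.Ici (0 : ℝ), Complex.exp (Complex.I * z * s) *
        ∫ ν : ℝ, Complex.exp (-(Complex.I * ν * s)) ∂m := by
  have hre : (Complex.I * z).re < 0 := by simpa using hz
  have hE : Integrable (fun s : ℝ => Complex.exp (Complex.I * z * s))
      (volume.restrict (Set.Ici (0 : ℝ))) :=
    Iff.mpr integrableOn_Ici_iff_integrableOn_Ioi (integrableOn_exp_mul_complex_Ioi hre 0)
  have hprod : Integrable (fun p : ℝ × ℝ => Complex.exp (Complex.I * z * p.1) *
      Complex.exp (-(Complex.I * p.2 * p.1))) ((volume.restrict (Set.Ici (0 : ℝ))).prod m) := by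
    have h1 := hE.comp_fst m
    refine h1.mul_bdd (c := 1) (by fun_prop) (Filter.Eventually.of_forall fun p => ?_)
    rw [Complex.norm_exp]
    simp
  have hInt := hprod.integral_prod_left
  simp only [integral_const_mul] at hInt
  refine ⟨hInt, ?_⟩
  simp only [← integral_const_mul (μ := m)]
  rw [integral_integral_swap hprod, ← integral_const_mul]
  congr 1
  ext ν
  have hre' : (Complex.I * (z - ν)).re < 0 := by simpa using hz
  have h2 := integral_exp_mul_complex_Ioi hre' 0
  have hne : z - ν ≠ 0 := by
    intro h
    rw [h] at hre'
    simp at hre'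
  have hne' : (ν : ℂ) - z ≠ 0 := by
    rw [← neg_sub]
    exact neg_ne_zero.mpr hne
  have h3 : ∀ s : ℝ, Complex.exp (Complex.I * z * s) * Complex.exp (-(Complex.I * ν * s))
      = Complex.exp (Complex.I * (z - ν) * s) := by
    intro s
    rw [← Complex.exp_add]
    congr 1
    ring
  simp only [h3]
  rw [integral_Ici_eq_integral_Ioi, h2]
  simp only [Complex.ofReal_zero, mul_zero, Complex.exp_zero]
  field_simp
  ring

/-- For every finite complex Borel measure `μ` on `ℝ` and every `z ∈ ℂ` with
`Im z > 0`, the function `s ↦ e^{izs}·μ̂(s)` is integrable on `[0,∞)`, where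
`μ̂(s) := ∫ e^{−iνs} μ(dν)`, and the Borel transform of `μ` satisfies
`∫ (ν − z)⁻¹ μ(dν) = i ∫₀^∞ e^{izs} μ̂(s) ds`. -/
theorem statement15 (μ : ComplexMeasure ℝ) (z : ℂ) (hz : 0 < z.im) :
    IntegrableOn (fun s : ℝ => Complex.exp (Complex.I * z * s) * cfourier μ s)
      (Set.Ici (0 : ℝ)) volume ∧
    cintegral μ (fun ν => ((ν : ℂ) - z)⁻¹)
      = Complex.I * ∫ s in Set.Ici (0 : ℝ), Complex.exp (Complex.I * z * s) * cfourier μ s := by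
  have a := pos_aux (ComplexMeasure.re μ).toJordanDecomposition.posPart z hz
  have b := pos_aux (ComplexMeasure.re μ).toJordanDecomposition.negPart z hz
  have c := pos_aux (ComplexMeasure.im μ).toJordanDecomposition.posPart z hz
  have d := pos_aux (ComplexMeasure.im μ).toJordanDecomposition.negPart z hz
  have key : (fun s : ℝ => Complex.exp (Complex.I * z * s) * cfourier μ s) = fun s : ℝ =>
      ((Complex.exp (Complex.I * z * s) * ∫ ν : ℝ, Complex.exp (-(Complex.I * ν * s))
          ∂(ComplexMeasure.re μ).toJordanDecomposition.posPart) -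
        (Complex.exp (Complex.I * z * s) * ∫ ν : ℝ, Complex.exp (-(Complex.I * ν * s))
          ∂(ComplexMeasure.re μ).toJordanDecomposition.negPart)) +
      Complex.I * ((Complex.exp (Complex.I * z * s) * ∫ ν : ℝ, Complex.exp (-(Complex.I * ν * s))
          ∂(ComplexMeasure.im μ).toJordanDecomposition.posPart) -
        (Complex.exp (Complex.I * z * s) * ∫ ν : ℝ, Complex.exp (-(Complex.I * ν * s))
          ∂(ComplexMeasure.im μ).toJordanDecomposition.negPart)) := by
    ext s
    simp only [cfourier, cintegral]
    ring
  rw [key]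
  refine ⟨(a.1.sub b.1).add ((c.1.sub d.1).const_mul Complex.I), ?_⟩
  rw [comb_aux _ _ _ _ _ a.1 b.1 c.1 d.1, cintegral, a.2, b.2, c.2, d.2]
  ring
end

section
/- Let 𝒜 be a unital C*-algebra, τ a strongly continuous one-parameter group of *-automorphisms of 𝒜, and Θ a time-reversal operation on 𝒜 such that τ is time-reversal invariant (Θ ∘ τ_t = τ_{−t} ∘ Θ for all t). Let ω : 𝒜 → ℂ be a continuous linear functional that is stationary, hermitian, and time-reversal invariant. Then for every ε ∈ {−1, +1}, all self-adjoint B₁, B₂ ∈ 𝒜 with Θ(B₁) = ε·B₁ and Θ(B₂) = ε·B₂, and every t ∈ ℝ: ∫₀ᵗ ω(i[B₁, τ_s(B₂)]) ds = ∫₀^{−t} ω(i[B₁, τ_s(B₂)]) ds = ∫₀ᵗ ω(i[B₂, τ_s(B₁)]) ds, where [A,B] := AB − BA. -/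
open MeasureTheory intervalIntegral

/-- Let `𝒜` be a unital C*-algebra, `τ` a strongly continuous one-parameter
group of *-automorphisms of `𝒜`, and `Θ` a time-reversal operation on `𝒜` such that `τ` is
time-reversal invariant (`Θ ∘ τ_t = τ_{−t} ∘ Θ`). Let `ω : 𝒜 → ℂ` be a continuous linear
functional that is stationary, hermitian, and time-reversal invariant. Then for every
`ε ∈ {−1,+1}`, all self-adjoint `B₁, B₂ ∈ 𝒜` with `Θ(Bⱼ) = ε·Bⱼ`, and every `t ∈ ℝ`:
`∫₀ᵗ ω(i[B₁, τ_s(B₂)]) ds = ∫₀^{−t} ω(i[B₁, τ_s(B₂)]) ds = ∫₀ᵗ ω(i[B₂, τ_s(B₁)]) ds`. -/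
theorem statement16 {A : Type*} [NormedRing A] [StarRing A] [CStarRing A]
    [NormedAlgebra ℂ A] [CompleteSpace A] [StarModule ℂ A]
    -- `τ` is a one-parameter group of *-automorphisms:
    (τ : ℝ → A → A)
    (hτ_zero : ∀ x : A, τ 0 x = x)
    (hτ_grp : ∀ s t : ℝ, ∀ x : A, τ (s + t) x = τ s (τ t x))
    (hτ_add : ∀ t : ℝ, ∀ x y : A, τ t (x + y) = τ t x + τ t y)
    (hτ_smul : ∀ t : ℝ, ∀ (c : ℂ) (x : A), τ t (c • x) = c • τ t x)
    (hτ_mul : ∀ t : ℝ, ∀ x y : A, τ t (x * y) = τ t x * τ t y)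
    (hτ_one : ∀ t : ℝ, τ t 1 = 1)
    (hτ_star : ∀ t : ℝ, ∀ x : A, τ t (star x) = star (τ t x))
    -- strong continuity:
    (hτ_cont : ∀ x : A, Continuous fun t : ℝ => τ t x)
    -- `Θ` is a time-reversal operation:
    (Θ : A → A)
    (hΘ_cont : Continuous Θ)
    (hΘ_add : ∀ x y : A, Θ (x + y) = Θ x + Θ y)
    (hΘ_smul : ∀ (c : ℂ) (x : A), Θ (c • x) = (starRingEnd ℂ) c • Θ x)
    (hΘ_one : Θ 1 = 1)
    (hΘ_mul : ∀ x y : A, Θ (x * y) = Θ x * Θ y)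
    (hΘ_star : ∀ x : A, Θ (star x) = star (Θ x))
    (hΘ_invol : ∀ x : A, Θ (Θ x) = x)
    -- `τ` is time-reversal invariant:
    (hΘτ : ∀ t : ℝ, ∀ x : A, Θ (τ t x) = τ (-t) (Θ x))
    -- `ω` is a continuous linear functional, stationary, hermitian, time-reversal invariant:
    (ω : A →L[ℂ] ℂ)
    (hω_stat : ∀ t : ℝ, ∀ x : A, ω (τ t x) = ω x)
    (hω_herm : ∀ x : A, ω (star x) = (starRingEnd ℂ) (ω x))
    (hω_tri : ∀ x : A, ω (Θ x) = (starRingEnd ℂ) (ω x)) :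
    ∀ B₁ B₂ : A, star B₁ = B₁ → star B₂ = B₂ →
      ((Θ B₁ = B₁ ∧ Θ B₂ = B₂) ∨ (Θ B₁ = -B₁ ∧ Θ B₂ = -B₂)) →
      ∀ t : ℝ,
        (∫ s in (0:ℝ)..t, ω (Complex.I • (B₁ * τ s B₂ - τ s B₂ * B₁)))
            = (∫ s in (0:ℝ)..(-t), ω (Complex.I • (B₁ * τ s B₂ - τ s B₂ * B₁))) ∧
        (∫ s in (0:ℝ)..t, ω (Complex.I • (B₁ * τ s B₂ - τ s B₂ * B₁)))
            = (∫ s in (0:ℝ)..t, ω (Complex.I • (B₂ * τ s B₁ - τ s B₁ * B₂))) := by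
  intro B₁ B₂ h₁ h₂ hε t
  -- hermiticity
  have hconj : ∀ s, ω (τ s B₂ * B₁) = (starRingEnd ℂ) (ω (B₁ * τ s B₂)) := by
    intro s
    rw [← hω_herm, star_mul, h₁, ← hτ_star, h₂]
  have hτneg : ∀ (s : ℝ) (x : A), τ s (-x) = -τ s x := by
    intro s x
    have h := hτ_smul s (-1) x
    simpa using h
  -- time reversal
  have hrev : ∀ s, ω (B₁ * τ (-s) B₂) = (starRingEnd ℂ) (ω (B₁ * τ s B₂)) := by
    intro s
    rw [← hω_tri, hΘ_mul, hΘτ]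
    rcases hε with ⟨e₁, e₂⟩ | ⟨e₁, e₂⟩
    · rw [e₁, e₂]
    · rw [e₁, e₂, hτneg, neg_mul_neg]
  -- stationarity
  have hst₁ : ∀ s, ω (B₂ * τ s B₁) = ω (τ (-s) B₂ * B₁) := by
    intro s
    rw [← hω_stat (-s) (B₂ * τ s B₁), hτ_mul, ← hτ_grp, neg_add_cancel, hτ_zero]
  have hst₂ : ∀ s, ω (τ s B₁ * B₂) = ω (B₁ * τ (-s) B₂) := by
    intro s
    rw [← hω_stat (-s) (τ s B₁ * B₂), hτ_mul, ← hτ_grp, neg_add_cancel, hτ_zero]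
  constructor
  · have h := intervalIntegral.integral_comp_neg (a := 0) (b := t)
      (fun s => ω (Complex.I • (B₁ * τ s B₂ - τ s B₂ * B₁)))
    rw [neg_zero] at h
    rw [intervalIntegral.integral_symm (-t) 0, ← h, ← intervalIntegral.integral_neg]
    congr 1
    funext s
    simp only [map_smul, map_sub, hconj, hrev, Complex.conj_conj, smul_eq_mul]
    ring
  · congr 1
    funext s
    simp only [map_smul, map_sub, hst₁, hst₂, hconj, hrev, Complex.conj_conj]
end

section
/- Let 𝒜 be a unital C*-algebra, τ a strongly continuous one-parameter group of *-automorphisms of 𝒜, Θ a time-reversal operation on 𝒜 such that τ is time-reversal invariant (Θ ∘ τ_t = τ_{−t} ∘ Θ for all t), and β ∈ (0,∞). Let ω be a state on 𝒜 satisfying the (τ,β)-KMS condition which is moreover stationary and hermitian. Then the functional ω^Θ defined by ω^Θ(B) := conj(ω(Θ(B))) is a state on 𝒜 satisfying the (τ,β)-KMS condition, and ½ω + ½ω^Θ is a state satisfying the (τ,β)-KMS condition that is time-reversal invariant, i.e., (½ω + ½ω^Θ)(Θ(B)) = conj((½ω + ½ω^Θ)(B)) for all B ∈ 𝒜. -/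
section

variable {A : Type*} [NormedRing A] [StarRing A] [CStarRing A]
  [NormedAlgebra ℂ A] [CompleteSpace A] [StarModule ℂ A]

/-- A state on a unital C*-algebra: a continuous linear functional `ω` with `ω(1) = 1` and
`ω(B*B)` a nonnegative real number for every `B`. -/
def IsState (ω : A →L[ℂ] ℂ) : Prop :=
  ω 1 = 1 ∧ ∀ B : A, ∃ r : ℝ, 0 ≤ r ∧ ω (star B * B) = (r : ℂ)

/-- The `(τ,β)`-KMS condition for a continuous linear functional `ω`: for all `B₁, B₂` there is
a bounded continuous function `F` on the closed strip `{0 ≤ Im z ≤ β}`, holomorphic on the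
open strip `{0 < Im z < β}`, with `F(t) = ω(B₁ τ_t(B₂))` and `F(t+iβ) = ω(τ_t(B₂) B₁)` for
all real `t`. -/
def IsKMS (τ : ℝ → A → A) (β : ℝ) (ω : A →L[ℂ] ℂ) : Prop :=
  ∀ B₁ B₂ : A, ∃ F : ℂ → ℂ,
    (∃ C : ℝ, ∀ z ∈ {z : ℂ | 0 ≤ z.im ∧ z.im ≤ β}, ‖F z‖ ≤ C) ∧
    ContinuousOn F {z : ℂ | 0 ≤ z.im ∧ z.im ≤ β} ∧
    DifferentiableOn ℂ F {z : ℂ | 0 < z.im ∧ z.im < β} ∧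
    (∀ t : ℝ, F (t : ℂ) = ω (B₁ * τ t B₂)) ∧
    (∀ t : ℝ, F ((t : ℂ) + Complex.I * (β : ℂ)) = ω (τ t B₂ * B₁))

/-- Let `𝒜` be a unital C*-algebra, `τ` a strongly continuous one-parameter
group of *-automorphisms, `Θ` a time-reversal operation with `Θ ∘ τ_t = τ_{−t} ∘ Θ`, and
`β ∈ (0,∞)`. Let `ω` be a state satisfying the `(τ,β)`-KMS condition which is moreover
stationary and hermitian. Then `ω^Θ(B) := conj(ω(Θ(B)))` is a state satisfying the
`(τ,β)`-KMS condition, and `½ω + ½ω^Θ` is a `(τ,β)`-KMS state that is time-reversal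
invariant. -/
theorem statement17
    (τ : ℝ → A → A)
    (hτ_zero : ∀ x : A, τ 0 x = x)
    (hτ_grp : ∀ s t : ℝ, ∀ x : A, τ (s + t) x = τ s (τ t x))
    (hτ_add : ∀ t : ℝ, ∀ x y : A, τ t (x + y) = τ t x + τ t y)
    (hτ_smul : ∀ t : ℝ, ∀ (c : ℂ) (x : A), τ t (c • x) = c • τ t x)
    (hτ_mul : ∀ t : ℝ, ∀ x y : A, τ t (x * y) = τ t x * τ t y)
    (hτ_one : ∀ t : ℝ, τ t 1 = 1)
    (hτ_star : ∀ t : ℝ, ∀ x : A, τ t (star x) = star (τ t x))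
    (hτ_cont : ∀ x : A, Continuous fun t : ℝ => τ t x)
    (Θ : A → A)
    (hΘ_cont : Continuous Θ)
    (hΘ_add : ∀ x y : A, Θ (x + y) = Θ x + Θ y)
    (hΘ_smul : ∀ (c : ℂ) (x : A), Θ (c • x) = (starRingEnd ℂ) c • Θ x)
    (hΘ_one : Θ 1 = 1)
    (hΘ_mul : ∀ x y : A, Θ (x * y) = Θ x * Θ y)
    (hΘ_star : ∀ x : A, Θ (star x) = star (Θ x))
    (hΘ_invol : ∀ x : A, Θ (Θ x) = x)
    (hΘτ : ∀ t : ℝ, ∀ x : A, Θ (τ t x) = τ (-t) (Θ x))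
    {β : ℝ} (hβ : 0 < β)
    (ω : A →L[ℂ] ℂ) (hω_state : IsState ω) (hω_kms : IsKMS τ β ω)
    (hω_stat : ∀ t : ℝ, ∀ x : A, ω (τ t x) = ω x)
    (hω_herm : ∀ x : A, ω (star x) = (starRingEnd ℂ) (ω x)) :
    ∃ ωΘ : A →L[ℂ] ℂ,
      (∀ B : A, ωΘ B = (starRingEnd ℂ) (ω (Θ B))) ∧
      IsState ωΘ ∧ IsKMS τ β ωΘ ∧
      IsState ((1/2 : ℂ) • ω + (1/2 : ℂ) • ωΘ) ∧
      IsKMS τ β ((1/2 : ℂ) • ω + (1/2 : ℂ) • ωΘ) ∧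
      (∀ B : A, ((1/2 : ℂ) • ω + (1/2 : ℂ) • ωΘ) (Θ B)
          = (starRingEnd ℂ) (((1/2 : ℂ) • ω + (1/2 : ℂ) • ωΘ) B)) := by
  have hstate : ∀ ωΘ : A →L[ℂ] ℂ, (∀ B : A, ωΘ B = (starRingEnd ℂ) (ω (Θ B))) →
      IsState ωΘ := by
    intro φ hφ
    refine ⟨by rw [hφ, hΘ_one, hω_state.1, map_one], fun B => ?_⟩
    obtain ⟨r, hr, h⟩ := hω_state.2 (Θ B)
    exact ⟨r, hr, by rw [hφ, hΘ_mul, hΘ_star, h, Complex.conj_ofReal]⟩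
  have hinv : ∀ (t : ℝ) (x : A), τ t (τ (-t) x) = x := by
    intro t x
    rw [← hτ_grp, add_neg_cancel, hτ_zero]
  have hkms : ∀ ωΘ : A →L[ℂ] ℂ, (∀ B : A, ωΘ B = (starRingEnd ℂ) (ω (Θ B))) →
      IsKMS τ β ωΘ := by
    intro φ hφ B₁ B₂
    obtain ⟨F, hb, hc, hd, h0, h1⟩ := hω_kms (star (Θ B₂)) (star (Θ B₁))
    refine ⟨F, hb, hc, hd, fun t => ?_, fun t => ?_⟩
    · rw [h0, hφ, hΘ_mul, hΘτ, ← hω_herm, star_mul, ← hω_stat t (star _ * star _), hτ_mul,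
        ← hτ_star, hinv]
    · rw [h1, hφ, hΘ_mul, hΘτ, ← hω_herm, star_mul, ← hω_stat t (star _ * star (τ (-t) _)),
        hτ_mul, ← hτ_star (-t), hinv]
  let φ : A →L[ℂ] ℂ :=
    { toFun := fun B => (starRingEnd ℂ) (ω (Θ B))
      map_add' := fun x y => by rw [hΘ_add, map_add, map_add]
      map_smul' := fun c x => by
        simp [hΘ_smul]
      cont := Complex.continuous_conj.comp (ω.continuous.comp hΘ_cont) }
  have hφ : ∀ B : A, φ B = (starRingEnd ℂ) (ω (Θ B)) := fun B => rfl
  clear_value φ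
  refine ⟨φ, hφ, hstate φ hφ, hkms φ hφ, ?_, ?_, ?_⟩
  · refine ⟨?_, fun B => ?_⟩
    · simp only [add_apply, smul_apply, smul_eq_mul,
        hω_state.1, (hstate φ hφ).1]
      norm_num
    · obtain ⟨r, hr, h⟩ := hω_state.2 B
      obtain ⟨q, hq, h'⟩ := (hstate φ hφ).2 B
      refine ⟨1 / 2 * r + 1 / 2 * q, by positivity, ?_⟩
      simp only [add_apply, smul_apply, smul_eq_mul,
        h, h']
      push_cast
      ring
  · intro B₁ B₂
    obtain ⟨F, ⟨C, hb⟩, hc, hd, h0, h1⟩ := hω_kms B₁ B₂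
    obtain ⟨G, ⟨D, gb⟩, gc, gd, g0, g1⟩ := hkms φ hφ B₁ B₂
    refine ⟨fun z => (1 / 2 : ℂ) * F z + (1 / 2 : ℂ) * G z, ⟨1 / 2 * C + 1 / 2 * D, ?_⟩, ?_, ?_, ?_, ?_⟩
    · intro z hz
      refine (norm_add_le _ _).trans ?_
      have e : ‖(1 / 2 : ℂ)‖ = 1 / 2 := by norm_num
      rw [norm_mul, norm_mul, e]
      linarith [hb z hz, gb z hz]
    · exact (continuousOn_const.mul hc).add (continuousOn_const.mul gc)
    · exact (hd.const_mul _).add (gd.const_mul _)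
    · intro t
      simp only [add_apply, smul_apply, smul_eq_mul,
        h0, g0]
    · intro t
      simp only [add_apply, smul_apply, smul_eq_mul,
        h1, g1]
  · intro B
    have e2 : (starRingEnd ℂ) 2 = 2 := Complex.conj_ofNat 2
    simp [hφ, hΘ_invol, e2]
    ring

end
end
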